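/- The fundamental group of the orbit space S³/Q8 is isomorphic to the quaternion group of order 8: for any base point, the fundamental group of the quotient of the unit sphere of the real quaternions by the left-multiplication action of the subgroup Q8 = {±1, ±i, ±j, ±k} is isomorphic (as a group) to Q8. -/

import Mathlib

/-!
The space `S³/Q₈` is the base of a covering `S³ → S³/Q₈` whose deck group is `Q₈`, and `S³` is simply
connected, so `π₁(S³/Q₈)` is the deck group.

*The sphere is simply connected.* Let `γ` be a loop in the unit sphere of a real inner product space
`E` of dimension at least `3`. Bernstein approximation gives a `C¹` map `g : ℝ → E` with the same
endpoints and `‖g t - γ t‖ < 1` on `[0, 1]`. The segment from `γ t` to `g t` avoids `0`, so after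
normalization it is a homotopy from `γ` to `g / ‖g‖` (`homotopic_of_near_loop`). The cone
`(r, t) ↦ r • g t` is `C¹` from a plane, hence not surjective, so `g / ‖g‖` misses a point of the sphere
(`exists_unit_notMem_range`). In the stereographic chart at that point the loop is contracted linearly
(`homotopic_refl_of_forall_ne`).

*The covering.* The unit quaternions form a topological group, `Q₈` is a finite, hence discrete,
subgroup, and the orbits are its right cosets. Mathlib's `IsQuotientCoveringMap.fundamentalGroupEquiv`
identifies `π₁` of the base with the opposite of the deck group, and inversion removes the opposite. That
`QuaternionGroup 2` embeds with image `Q₈` is a finite check, done on Lipschitz integer quaternions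
where equality is decidable.
-/

open Quaternion

/-- The three-dimensional sphere, realized as the set of real quaternions of norm one. -/
noncomputable def SphereQuat : Type := {x : ℍ[ℝ] // ‖x‖ = 1}

noncomputable instance : TopologicalSpace SphereQuat :=
  inferInstanceAs (TopologicalSpace {x : ℍ[ℝ] // ‖x‖ = 1})

/-- The quaternion group `Q₈ = {±1, ±i, ±j, ±k}` as a set of quaternions. -/
noncomputable def Q8 : Set ℍ[ℝ] :=
  {1, -1, ⟨0, 1, 0, 0⟩, -⟨0, 1, 0, 0⟩, ⟨0, 0, 1, 0⟩, -⟨0, 0, 1, 0⟩, ⟨0, 0, 0, 1⟩, -⟨0, 0, 0, 1⟩}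

/-- The orbit relation of the left-multiplication action of `Q₈` on `S³`. -/
noncomputable def q8Rel (x y : SphereQuat) : Prop := ∃ q ∈ Q8, q * x.val = y.val

open Metric Module unitInterval
open scoped Topology

section Sphere

variable {E : Type*} [NormedAddCommGroup E] [InnerProductSpace ℝ E]

/-- A loop in the sphere is approximated within distance `1` by a `C¹` curve with the same endpoints:
Bernstein approximations interpolate at `0` and `1`. -/
theorem exists_contDiff_near_loop {x : sphere (0 : E) 1} (γ : Path x x) :
    ∃ g : ℝ → E, ContDiff ℝ 1 g ∧ g 0 = x ∧ g 1 = x ∧ ∀ t : I, ‖g t - γ t‖ < 1 := by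
  let f : C(I, E) := ⟨fun t ↦ (γ t : E), by fun_prop⟩
  have hlim := bernsteinApproximation_uniform f
  obtain ⟨n, hn, hn0⟩ := ((hlim.eventually (Metric.ball_mem_nhds f one_pos)).and
    (Filter.eventually_ne_atTop 0)).exists
  have key : ∀ t : I, (∑ k : Fin (n + 1),
      (bernsteinPolynomial ℝ n k).eval (t : ℝ) • f (bernstein.z k)) =
        bernsteinApproximation n f t := fun t ↦ by
    rw [bernsteinApproximation.apply]
    rfl
  refine ⟨fun t ↦ ∑ k : Fin (n + 1),
    (bernsteinPolynomial ℝ n k).eval t • f (bernstein.z k), ?_, ?_, ?_, fun t ↦ ?_⟩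
  · have hpoly (k : ℕ) : ContDiff ℝ 1 fun t : ℝ ↦ (bernsteinPolynomial ℝ n k).eval t :=
      Polynomial.contDiff_aeval (bernsteinPolynomial ℝ n k) 1
    exact ContDiff.sum fun k _ ↦ (hpoly k).smul contDiff_const
  · refine (key 0).trans ?_
    rw [bernsteinApproximation.apply_zero]
    simp [f]
  · refine (key 1).trans ?_
    rw [bernsteinApproximation.apply_one hn0]
    simp [f]
  · dsimp only
    rw [key, ← dist_eq_norm]
    exact (ContinuousMap.dist_apply_le_dist t).trans_lt hn

/-- A loop in the sphere is homotopic to the normalization of any curve in `E` with the same endpoints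
at pointwise distance less than `1` from it. -/
theorem homotopic_of_near_loop {x : sphere (0 : E) 1} (γ : Path x x) {g : ℝ → E}
    (hg : Continuous g) (h0 : g 0 = x) (h1 : g 1 = x) (hγ : ∀ t : I, ‖g t - γ t‖ < 1) :
    ∃ q : Path x x, γ.Homotopic q ∧ ∀ t : I, (q t : E) = ‖g t‖⁻¹ • g t := by
  let F : I × I → E := fun z ↦ (γ z.2 : E) + (z.1 : ℝ) • (g z.2 - γ z.2)
  have hF : Continuous F := by fun_prop
  -- `F z = 0` would give `1 = ‖γ t‖ = s * ‖g t - γ t‖ < 1`.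
  have hne : ∀ z, F z ≠ 0 := fun z hz ↦ by
    have h2 : ‖(γ z.2 : E)‖ = 1 := norm_eq_of_mem_sphere _
    rw [eq_neg_of_add_eq_zero_left hz, norm_neg, norm_smul, Real.norm_of_nonneg z.1.2.1] at h2
    nlinarith [hγ z.2, z.1.2.1, z.1.2.2, norm_nonneg (g z.2 - γ z.2)]
  let N : I × I → sphere (0 : E) 1 := fun z ↦ ⟨‖F z‖⁻¹ • F z, by
    simp [norm_smul, hne z]⟩
  have hN : Continuous N := by
    refine Continuous.subtype_mk (Continuous.smul ?_ hF) _
    exact hF.norm.inv₀ fun z ↦ norm_ne_zero_iff.mpr (hne z)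
  have hN0 : ∀ t, N (0, t) = γ t := fun t ↦ Subtype.ext (by simp [N, F])
  have hs : ∀ s, N (s, 0) = x := fun s ↦ Subtype.ext (by simp [N, F, h0])
  have ht : ∀ s, N (s, 1) = x := fun s ↦ Subtype.ext (by simp [N, F, h1])
  refine ⟨⟨⟨fun t ↦ N (1, t), by fun_prop⟩, hs 1, ht 1⟩, ⟨⟨⟨⟨N, hN⟩, hN0, fun t ↦ rfl⟩, ?_⟩⟩, ?_⟩
  · rintro s t (rfl | rfl)
    · simp [hs]
    · simp [ht]
  · intro t
    simp [N, F]
    rw [← smul_add, add_sub_cancel]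

/-- A loop avoiding a point `w` of the sphere is null-homotopic: the stereographic projection from `w`
carries it to a linear space. -/
theorem homotopic_refl_of_forall_ne {x w : sphere (0 : E) 1} (γ : Path x x)
    (hγ : ∀ t, γ t ≠ w) : γ.Homotopic (Path.refl x) := by
  let τ := stereographic (norm_eq_of_mem_sphere w)
  have hsrc : ∀ t, γ t ∈ τ.source := fun t ↦ by simpa [τ] using hγ t
  have hx : x ∈ τ.source := by simpa using hsrc 0
  have hτγ : Continuous fun t ↦ τ (γ t) :=
    τ.continuousOn.comp_continuous γ.continuous hsrc
  have hτ : Continuous τ.symm := by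
    simpa [τ, continuousOn_univ] using τ.continuousOn_symm
  refine ⟨⟨⟨⟨fun z ↦ τ.symm (τ (γ z.2) + (z.1 : ℝ) • (τ x - τ (γ z.2))), ?_⟩, ?_, ?_⟩, ?_⟩⟩
  · exact hτ.comp <| (hτγ.comp continuous_snd).add <|
      (continuous_subtype_val.comp continuous_fst).smul <|
        continuous_const.sub (hτγ.comp continuous_snd)
  · intro t
    simp [τ.left_inv (hsrc t)]
  · intro t
    simp [τ.left_inv hx]
  · rintro s t (rfl | rfl) <;> simp [τ.left_inv hx]

/-- The radial projection to the sphere of a `C¹` curve misses a point, since the cone over the curve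
has dimension at most `2`. -/
theorem exists_unit_notMem_range [FiniteDimensional ℝ E] (hE : 2 < finrank ℝ E) {g : ℝ → E}
    (hg : ContDiff ℝ 1 g) :
    ∃ w : sphere (0 : E) 1, ∀ t, (w : E) ≠ ‖g t‖⁻¹ • g t := by
  have hcone : ContDiff ℝ 1 fun z : ℝ × ℝ ↦ z.1 • g z.2 :=
    contDiff_fst.smul (hg.comp contDiff_snd)
  obtain ⟨v, hv⟩ := (hcone.dense_compl_range_of_finrank_lt_finrank (by simpa using hE)).nonempty
  have hv0 : v ≠ 0 := by
    rintro rfl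
    exact hv ⟨(0, 0), zero_smul _ _⟩
  refine ⟨⟨‖v‖⁻¹ • v, by simp [norm_smul, hv0]⟩, fun t ht ↦ hv ⟨(‖v‖ * ‖g t‖⁻¹, t), ?_⟩⟩
  dsimp only at ht ⊢
  rw [mul_smul, ← ht, smul_inv_smul₀ (norm_ne_zero_iff.mpr hv0)]

theorem simplyConnectedSpace_sphere [FiniteDimensional ℝ E] (hE : 2 < finrank ℝ E) :
    SimplyConnectedSpace (sphere (0 : E) 1) := by
  rw [simply_connected_iff_loops_nullhomotopic]
  refine ⟨isPathConnected_iff_pathConnectedSpace.mp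
    (isPathConnected_sphere ?_ 0 zero_le_one), fun x γ ↦ ?_⟩
  · rw [← finrank_eq_rank]
    exact_mod_cast (by omega : 1 < finrank ℝ E)
  · obtain ⟨g, hg, h0, h1, hγ⟩ := exists_contDiff_near_loop γ
    obtain ⟨q, hq, hqg⟩ := homotopic_of_near_loop γ hg.continuous h0 h1 hγ
    obtain ⟨w, hw⟩ := exists_unit_notMem_range hE hg
    exact hq.trans (homotopic_refl_of_forall_ne (w := w) q fun t ht ↦ hw t (by rw [← ht, hqg]))

end Sphere

section Cover

/-- The embedding of the quaternion group into the integer quaternions with `a ↦ i` and `x ↦ j`, as a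
table of the values at `aⁱ` and `x aⁱ`. -/
def q8Int : QuaternionGroup 2 → ℍ[ℤ]
  | .a i => (![⟨1, 0, 0, 0⟩, ⟨0, 1, 0, 0⟩, ⟨-1, 0, 0, 0⟩, ⟨0, -1, 0, 0⟩] : Fin 4 → ℍ[ℤ]) i
  | .xa i => (![⟨0, 0, 1, 0⟩, ⟨0, 0, 0, -1⟩, ⟨0, 0, -1, 0⟩, ⟨0, 0, 0, 1⟩] : Fin 4 → ℍ[ℤ]) i

instance : DecidableEq ℍ[ℤ] := fun _ _ ↦ decidable_of_iff _ (Quaternion.ext_iff).symm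

theorem q8Int_injective : Function.Injective q8Int := by decide

theorem q8Int_mul : ∀ g h, q8Int (g * h) = q8Int g * q8Int h := by decide +kernel

/-- The embedding `a ↦ i`, `x ↦ j` of the quaternion group into the real quaternions. -/
noncomputable def q8Val (g : QuaternionGroup 2) : ℍ[ℝ] :=
  ⟨(q8Int g).re, (q8Int g).imI, (q8Int g).imJ, (q8Int g).imK⟩

theorem q8Val_mul (g h : QuaternionGroup 2) : q8Val (g * h) = q8Val g * q8Val h := by
  have hre (g) : (q8Val g).re = (q8Int g).re := rfl
  have hI (g) : (q8Val g).imI = (q8Int g).imI := rfl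
  have hJ (g) : (q8Val g).imJ = (q8Int g).imJ := rfl
  have hK (g) : (q8Val g).imK = (q8Int g).imK := rfl
  ext <;>
    simp only [re_mul, imI_mul, imJ_mul, imK_mul, hre, hI, hJ, hK, q8Int_mul] <;> push_cast <;> rfl

theorem q8Val_injective : Function.Injective q8Val := fun g h hgh ↦ by
  have hre : ((q8Int g).re : ℝ) = (q8Int h).re := congrArg QuaternionAlgebra.re hgh
  have hI : ((q8Int g).imI : ℝ) = (q8Int h).imI := congrArg QuaternionAlgebra.imI hgh
  have hJ : ((q8Int g).imJ : ℝ) = (q8Int h).imJ := congrArg QuaternionAlgebra.imJ hgh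
  have hK : ((q8Int g).imK : ℝ) = (q8Int h).imK := congrArg QuaternionAlgebra.imK hgh
  apply q8Int_injective
  ext
  exacts [mod_cast hre, mod_cast hI, mod_cast hJ, mod_cast hK]

theorem normSq_q8Int : ∀ g, (q8Int g).re ^ 2 + (q8Int g).imI ^ 2 + (q8Int g).imJ ^ 2 +
    (q8Int g).imK ^ 2 = 1 := by decide

theorem norm_q8Val (g : QuaternionGroup 2) : ‖q8Val g‖ = 1 := by
  have h : normSq (q8Val g) = 1 := by
    have hg := congrArg (Int.cast : ℤ → ℝ) (normSq_q8Int g)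
    push_cast at hg
    exact (normSq_def' _).trans hg
  rw [normSq_eq_norm_mul_self] at h
  nlinarith [norm_nonneg (q8Val g)]

theorem range_q8Val : Set.range q8Val = Q8 := by
  have h0 : q8Val (.a 0) = 1 := by
    change (⟨((1 : ℤ) : ℝ), ((0 : ℤ) : ℝ), ((0 : ℤ) : ℝ), ((0 : ℤ) : ℝ)⟩ : ℍ[ℝ]) = _
    ext <;> simp
  have h1 : q8Val (.a 1) = ⟨0, 1, 0, 0⟩ := by
    change (⟨((0 : ℤ) : ℝ), ((1 : ℤ) : ℝ), ((0 : ℤ) : ℝ), ((0 : ℤ) : ℝ)⟩ : ℍ[ℝ]) = _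
    simp
  have h2 : q8Val (.xa 0) = ⟨0, 0, 1, 0⟩ := by
    change (⟨((0 : ℤ) : ℝ), ((0 : ℤ) : ℝ), ((1 : ℤ) : ℝ), ((0 : ℤ) : ℝ)⟩ : ℍ[ℝ]) = _
    simp
  have h3 : q8Val (.xa 3) = ⟨0, 0, 0, 1⟩ := by
    change (⟨((0 : ℤ) : ℝ), ((0 : ℤ) : ℝ), ((0 : ℤ) : ℝ), ((1 : ℤ) : ℝ)⟩ : ℍ[ℝ]) = _
    simp
  have hneg (g h) (e : q8Int h = -q8Int g) : q8Val h = -q8Val g := by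
    ext
    · exact (congrArg (fun z : ℍ[ℤ] ↦ (z.re : ℝ)) e).trans (Int.cast_neg _)
    · exact (congrArg (fun z : ℍ[ℤ] ↦ (z.imI : ℝ)) e).trans (Int.cast_neg _)
    · exact (congrArg (fun z : ℍ[ℤ] ↦ (z.imJ : ℝ)) e).trans (Int.cast_neg _)
    · exact (congrArg (fun z : ℍ[ℤ] ↦ (z.imK : ℝ)) e).trans (Int.cast_neg _)
  have h4 : q8Val (.a 2) = -1 := h0 ▸ hneg (.a 0) (.a 2) (by decide)
  have h5 : q8Val (.a 3) = -⟨0, 1, 0, 0⟩ := h1 ▸ hneg (.a 1) (.a 3) (by decide)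
  have h6 : q8Val (.xa 2) = -⟨0, 0, 1, 0⟩ := h2 ▸ hneg (.xa 0) (.xa 2) (by decide)
  have h7 : q8Val (.xa 1) = -⟨0, 0, 0, 1⟩ := h3 ▸ hneg (.xa 3) (.xa 1) (by decide)
  have huniv : (Set.univ : Set (QuaternionGroup 2)) =
      {.a 0, .a 2, .a 1, .a 3, .xa 0, .xa 2, .xa 3, .xa 1} := by
    refine (Set.eq_univ_of_forall ?_).symm
    simp only [Set.mem_insert_iff, Set.mem_singleton_iff]
    decide
  rw [← Set.image_univ, huniv, Q8]
  simp only [Set.image_insert_eq, Set.image_singleton, h0, h1, h2, h3, h4, h5, h6, h7]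

/-- The embedding `a ↦ i`, `x ↦ j` of the quaternion group into the group of unit quaternions. -/
noncomputable def q8Hom : QuaternionGroup 2 →* sphere (0 : ℍ[ℝ]) 1 :=
  .mk' (fun g ↦ ⟨q8Val g, by simp [norm_q8Val]⟩) fun g h ↦ Subtype.ext (q8Val_mul g h)

theorem q8Hom_injective : Function.Injective q8Hom := fun _ _ h ↦
  q8Val_injective (congrArg Subtype.val h)

/-- The identity, from Mathlib's unit sphere of `ℍ[ℝ]`, which carries a topological group structure,
to `SphereQuat`. -/
noncomputable def sphereHomeo : sphere (0 : ℍ[ℝ]) 1 ≃ₜ SphereQuat :=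
  (Homeomorph.setCongr (by ext; simp) : sphere (0 : ℍ[ℝ]) 1 ≃ₜ {x : ℍ[ℝ] | ‖x‖ = 1})

/-- `q8Rel` is the right coset relation of `Q₈` in the unit quaternions. -/
theorem q8Rel_sphereHomeo {x y : sphere (0 : ℍ[ℝ]) 1} :
    q8Rel (sphereHomeo x) (sphereHomeo y) ↔ y * x⁻¹ ∈ q8Hom.range := by
  change (∃ q ∈ Q8, q * (x : ℍ[ℝ]) = y) ↔ _
  simp_rw [← range_q8Val, Set.exists_range_iff, MonoidHom.mem_range, eq_mul_inv_iff_mul_eq,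
    Subtype.ext_iff]
  rfl

theorem mk_sphereHomeo_eq_iff {x y : sphere (0 : ℍ[ℝ]) 1} :
    Quot.mk q8Rel (sphereHomeo x) = Quot.mk q8Rel (sphereHomeo y) ↔ y * x⁻¹ ∈ q8Hom.range := by
  refine ⟨fun h ↦ ?_, fun h ↦ Quot.sound (q8Rel_sphereHomeo.mpr h)⟩
  -- `q8Rel` is already an equivalence relation, so passing to `Quot` identifies nothing more.
  have hlift : ∀ a b, q8Rel a b → (Quotient.mk (QuotientGroup.rightRel q8Hom.range)
      (sphereHomeo.symm a)) = Quotient.mk _ (sphereHomeo.symm b) := fun a b hab ↦ by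
    refine Quotient.sound (QuotientGroup.rightRel_apply.mpr (q8Rel_sphereHomeo.mp ?_))
    simpa using hab
  have := congrArg (Quot.lift _ hlift) h
  simpa [QuotientGroup.rightRel_apply] using Quotient.exact this

theorem isQuotientCoveringMap_mk_sphereHomeo :
    IsQuotientCoveringMap (fun x ↦ Quot.mk q8Rel (sphereHomeo x)) q8Hom.range :=
  (isQuotientMap_quot_mk.comp sphereHomeo.isQuotientMap).isQuotientCoveringMap_of_subgroup _
    (show (q8Hom.range : Set (sphere (0 : ℍ[ℝ]) 1)).Finite from
      Set.finite_range q8Hom).isDiscrete mk_sphereHomeo_eq_iff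

end Cover

/-- the fundamental group of the orbit space `S³/Q₈` (at any base point) is
isomorphic to the quaternion group of order 8. -/
theorem fundamentalGroup_S3_mod_Q8 (p : Quot q8Rel) :
    Nonempty (FundamentalGroup (Quot q8Rel) p ≃* QuaternionGroup 2) := by
  have : SimplyConnectedSpace (sphere (0 : ℍ[ℝ]) 1) :=
    simplyConnectedSpace_sphere (by simp [Quaternion.finrank_eq_four])
  have hp := isQuotientCoveringMap_mk_sphereHomeo
  obtain ⟨e, he⟩ := hp.surjective p
  exact ⟨(hp.fundamentalGroupEquiv ⟨e, he⟩).trans <|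
    (MulEquiv.inv' q8Hom.range).symm.trans (MonoidHom.ofInjective q8Hom_injective).symm⟩
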